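/- Every element z of order 3 in the Paige loop over F₂ is contained in a subloop isomorphic to S₃; equivalently, there exists an involution x with zx of order 2. -/

import Mathlib

/-- Zorn vector matrices over the field with two elements. -/
structure Zorn2 where
  a : ZMod 2
  alpha : Fin 3 → ZMod 2
  beta : Fin 3 → ZMod 2
  b : ZMod 2

namespace Zorn2

/-- Standard dot product on `F₂³`. -/
def zdot (u v : Fin 3 → ZMod 2) : ZMod 2 := u 0 * v 0 + u 1 * v 1 + u 2 * v 2

/-- Standard cross product on `F₂³`. -/
def zcross (u v : Fin 3 → ZMod 2) : Fin 3 → ZMod 2 :=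
  ![u 1 * v 2 - u 2 * v 1, u 2 * v 0 - u 0 * v 2, u 0 * v 1 - u 1 * v 0]

/-- Zorn's vector matrix multiplication. -/
instance : Mul Zorn2 :=
  ⟨fun x y =>
    { a := x.a * y.a + zdot x.alpha y.beta
      alpha := fun i => x.a * y.alpha i + x.alpha i * y.b - zcross x.beta y.beta i
      beta := fun i => x.beta i * y.a + x.b * y.beta i + zcross x.alpha y.alpha i
      b := zdot x.beta y.alpha + x.b * y.b }⟩

instance : One Zorn2 := ⟨{ a := 1, alpha := fun _ => 0, beta := fun _ => 0, b := 1 }⟩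

instance : Add Zorn2 :=
  ⟨fun x y => { a := x.a + y.a, alpha := x.alpha + y.alpha,
                beta := x.beta + y.beta, b := x.b + y.b }⟩

/-- Determinant (norm) of a Zorn vector matrix. -/
def det (x : Zorn2) : ZMod 2 := x.a * x.b - zdot x.alpha x.beta

/-- `x` has multiplicative order 2. -/
def ord2 (x : Zorn2) : Prop := x * x = 1 ∧ x ≠ 1

/-- `x` has multiplicative order 3. -/
def ord3 (x : Zorn2) : Prop := x * (x * x) = 1 ∧ x * x ≠ 1 ∧ x ≠ 1

end Zorn2

/-!
Over `F₂`, Cayley–Hamilton says that an element of determinant `1` and trace `0` squares to `1`. So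
an element `z` of order 3 has trace `1`; its diagonal entries then have product `0`, and `det z = 1`
forces the off-diagonal vectors `α`, `β` to satisfy `α · β = 1`; in particular neither is `0`. Let
`x` be the lower unitriangular element with off-diagonal vector `β ≠ 0`. The trace of `z * x` is
`1 + α · β = 0` and its upper right entry is `α - β × β = α ≠ 0`; thus `x`, `z * x` are involutions.
-/

attribute [ext] Zorn2

namespace Zorn2

open Matrix

theorem zdot_eq_dotProduct (u v : Fin 3 → ZMod 2) : zdot u v = u ⬝ᵥ v :=
  (vec3_dotProduct u v).symm

theorem zcross_eq_crossProduct (u v : Fin 3 → ZMod 2) : zcross u v = u ⨯₃ v :=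
  (cross_apply u v).symm

section Coordinates

variable (x y : Zorn2)

theorem one_alpha : (1 : Zorn2).alpha = 0 := rfl

theorem mul_a : (x * y).a = x.a * y.a + zdot x.alpha y.beta := rfl

theorem mul_b : (x * y).b = zdot x.beta y.alpha + x.b * y.b := rfl

theorem mul_alpha :
    (x * y).alpha = x.a • y.alpha + y.b • x.alpha - zcross x.beta y.beta := by
  rw [← op_smul_eq_smul y.b]
  rfl

theorem mul_beta :
    (x * y).beta = y.a • x.beta + x.b • y.beta + zcross x.alpha y.alpha := by
  rw [← op_smul_eq_smul y.a]
  rfl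

end Coordinates

/-- The trace of a Zorn vector matrix, the linear coefficient of its quadratic equation. -/
def trace (x : Zorn2) : ZMod 2 := x.a + x.b

theorem det_mul (x y : Zorn2) : det (x * y) = det x * det y := by
  simp only [det, zdot, mul_a, mul_b, mul_alpha, mul_beta, zcross, Pi.add_apply, Pi.sub_apply,
    Pi.smul_apply, smul_eq_mul, cons_val]
  ring

/-- Cayley–Hamilton, `x² = (tr x) x - (det x) 1`, in coordinates. -/
theorem mul_self_eq (x : Zorn2) :
    x * x = ⟨trace x * x.a - det x, trace x • x.alpha, trace x • x.beta,
      trace x * x.b - det x⟩ := by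
  ext1
  · rw [mul_a, trace, det]
    ring
  · simp only [mul_alpha, zcross_eq_crossProduct, cross_self, sub_zero, trace, add_smul]
  · simp only [mul_beta, zcross_eq_crossProduct, cross_self, add_zero, trace, add_smul]
  · rw [mul_b, trace, det, zdot_eq_dotProduct, zdot_eq_dotProduct, dotProduct_comm x.beta]
    ring

theorem mul_self_eq_one {x : Zorn2} (hdet : det x = 1) (htrace : trace x = 0) : x * x = 1 := by
  rw [mul_self_eq, hdet, htrace]
  simp only [zero_mul, zero_smul, zero_sub, CharTwo.neg_eq]
  rfl

theorem ord2_of_trace_eq_zero {x : Zorn2} (hdet : det x = 1) (htrace : trace x = 0)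
    (hne : x ≠ 1) : ord2 x :=
  ⟨mul_self_eq_one hdet htrace, hne⟩

theorem trace_eq_one_of_mul_self_ne_one {x : Zorn2} (hdet : det x = 1) (hx : x * x ≠ 1) :
    trace x = 1 :=
  Fin.eq_one_of_ne_zero _ fun htrace => hx (mul_self_eq_one hdet htrace)

theorem zdot_alpha_beta_eq_one {z : Zorn2} (hdet : det z = 1) (htrace : trace z = 1) :
    zdot z.alpha z.beta = 1 := by
  have mul_eq_zero_of_add_eq_one : ∀ a b : ZMod 2, a + b = 1 → a * b = 0 := by decide
  rwa [det, mul_eq_zero_of_add_eq_one _ _ htrace, zero_sub, CharTwo.neg_eq] at hdet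

/-- The lower unitriangular matrix with off-diagonal vector `u`; for `u ≠ 0` it is the involution
used to invert an element of order 3. -/
def lowerUnitriangular (u : Fin 3 → ZMod 2) : Zorn2 := ⟨1, 0, u, 1⟩

section LowerUnitriangular

variable (u : Fin 3 → ZMod 2)

theorem det_lowerUnitriangular : det (lowerUnitriangular u) = 1 := by
  simp [det, lowerUnitriangular, zdot_eq_dotProduct]

theorem trace_lowerUnitriangular : trace (lowerUnitriangular u) = 0 :=
  CharTwo.add_self_eq_zero 1

theorem trace_mul_lowerUnitriangular (z : Zorn2) :
    trace (z * lowerUnitriangular u) = trace z + zdot z.alpha u := by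
  simp only [trace, mul_a, mul_b, lowerUnitriangular, zdot_eq_dotProduct, dotProduct_zero, mul_one]
  ring

theorem alpha_mul_lowerUnitriangular (z : Zorn2) :
    (z * lowerUnitriangular u).alpha = z.alpha - zcross z.beta u := by
  simp only [mul_alpha, lowerUnitriangular, smul_zero, one_smul, zero_add]

end LowerUnitriangular

theorem ord2_lowerUnitriangular {u : Fin 3 → ZMod 2} (hu : u ≠ 0) :
    ord2 (lowerUnitriangular u) :=
  ord2_of_trace_eq_zero (det_lowerUnitriangular u) (trace_lowerUnitriangular u)
    fun h => hu (congrArg beta h)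

theorem ord2_mul_lowerUnitriangular_beta {z : Zorn2} (hdet : det z = 1) (htrace : trace z = 1) :
    ord2 (z * lowerUnitriangular z.beta) := by
  have hdot : zdot z.alpha z.beta = 1 := zdot_alpha_beta_eq_one hdet htrace
  refine ord2_of_trace_eq_zero ?_ ?_ fun h => ?_
  · rw [det_mul, hdet, det_lowerUnitriangular, one_mul]
  · rw [trace_mul_lowerUnitriangular, htrace, hdot, CharTwo.add_self_eq_zero]
  · have halpha : z.alpha = 0 := by
      simpa only [alpha_mul_lowerUnitriangular, zcross_eq_crossProduct, cross_self, sub_zero,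
        one_alpha] using congrArg alpha h
    simp [halpha, zdot_eq_dotProduct] at hdot

end Zorn2

open Zorn2 in
theorem stmt13 (z : Zorn2) (hdz : Zorn2.det z = 1) (hz3 : Zorn2.ord3 z) :
    ∃ x : Zorn2, Zorn2.det x = 1 ∧ Zorn2.ord2 x ∧ Zorn2.ord2 (z * x) := by
  have htrace : trace z = 1 := trace_eq_one_of_mul_self_ne_one hdz hz3.2.1
  have hdot : zdot z.alpha z.beta = 1 := zdot_alpha_beta_eq_one hdz htrace
  have hbeta : z.beta ≠ 0 := fun h => by simp [h, zdot_eq_dotProduct] at hdot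
  exact ⟨lowerUnitriangular z.beta, det_lowerUnitriangular _, ord2_lowerUnitriangular hbeta,
    ord2_mul_lowerUnitriangular_beta hdz htrace⟩
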